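/- arXiv:1906.09121 — 5 statements merged into one kernel-verified Lean document; each statement's English description precedes it below -/
import Mathlib

section
/- Let A be a real m×n matrix (m < n) of full rank m, let b be a real m-vector, and let u be the all-ones n-vector. Assume A u ≠ 0. Define α* = (uᵀ Aᵀ (A Aᵀ)⁻¹ b) / (uᵀ Aᵀ (A Aᵀ)⁻¹ A u) and x_V = Aᵀ (A Aᵀ)⁻¹ (b − (A u) α*) + α* u. Then x_V is the unique minimum-variance solution: for every real n-vector z with A z = b and z ≠ x_V, the variance of z is strictly greater than the variance of x_V. -/
open Matrix

noncomputable def mean {n : ℕ} (x : Fin n → ℝ) : ℝ := (∑ i, x i) / n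

noncomputable def variance {n : ℕ} (x : Fin n → ℝ) : ℝ := ∑ i, (x i - mean x) ^ 2

theorem mv_solution_unique (m n : ℕ) (hm : 0 < m) (hmn : m < n)
    (A : Matrix (Fin m) (Fin n) ℝ) (hrank : A.rank = m)
    (b : Fin m → ℝ)
    (u : Fin n → ℝ) (hu : u = fun _ => (1 : ℝ))
    (hAu : A *ᵥ u ≠ 0)
    (αs : ℝ)
    (hαs : αs = (u ⬝ᵥ Aᵀ *ᵥ ((A * Aᵀ)⁻¹ *ᵥ b)) /
                (u ⬝ᵥ Aᵀ *ᵥ ((A * Aᵀ)⁻¹ *ᵥ (A *ᵥ u))))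
    (xV : Fin n → ℝ)
    (hxV : xV = Aᵀ *ᵥ ((A * Aᵀ)⁻¹ *ᵥ (b - αs • (A *ᵥ u))) + αs • u) :
    ∀ z : Fin n → ℝ, A *ᵥ z = b → z ≠ xV → variance xV < variance z := by
  have hU : IsUnit (A * Aᵀ).det := by
    rw [← Matrix.isUnit_iff_isUnit_det]
    have h1 : (A * Aᵀ).rank = m := by rw [Matrix.rank_self_mul_transpose, hrank]
    rw [← Matrix.mulVec_surjective_iff_isUnit]
    have h2 : LinearMap.range (A * Aᵀ).mulVecLin = ⊤ := by
      apply Submodule.eq_top_of_finrank_eq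
      rw [← Matrix.rank, h1]
      simp
    exact LinearMap.range_eq_top.1 h2
  have hG : ∀ v : Fin m → ℝ, A *ᵥ (Aᵀ *ᵥ ((A * Aᵀ)⁻¹ *ᵥ v)) = v := by
    intro v
    rw [Matrix.mulVec_mulVec, Matrix.mulVec_mulVec, Matrix.mul_nonsing_inv _ hU,
      Matrix.one_mulVec]
  have hT : ∀ (v : Fin n → ℝ) (y : Fin m → ℝ), v ⬝ᵥ (Aᵀ *ᵥ y) = (A *ᵥ v) ⬝ᵥ y := by
    intro v y
    rw [Matrix.dotProduct_mulVec, Matrix.vecMul_transpose]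
  have hD : u ⬝ᵥ Aᵀ *ᵥ ((A * Aᵀ)⁻¹ *ᵥ (A *ᵥ u)) ≠ 0 := by
    intro h
    have h1 : (Aᵀ *ᵥ ((A * Aᵀ)⁻¹ *ᵥ (A *ᵥ u))) ⬝ᵥ (Aᵀ *ᵥ ((A * Aᵀ)⁻¹ *ᵥ (A *ᵥ u))) = 0 := by
      rw [hT, hG, ← hT, h]
    have h2 := dotProduct_self_eq_zero.1 h1
    have h3 := hG (A *ᵥ u)
    rw [h2, Matrix.mulVec_zero] at h3
    exact hAu h3.symm
  intro z hz hne
  obtain ⟨w, hw⟩ : ∃ w, w = Aᵀ *ᵥ ((A * Aᵀ)⁻¹ *ᵥ (b - αs • (A *ᵥ u))) := ⟨_, rfl⟩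
  have huw : u ⬝ᵥ w = 0 := by
    rw [hw, Matrix.mulVec_sub, Matrix.mulVec_smul, Matrix.mulVec_sub, Matrix.mulVec_smul,
      dotProduct_sub, dotProduct_smul, smul_eq_mul, hαs, div_mul_cancel₀ _ hD, sub_self]
  have hAw : A *ᵥ w = b - αs • (A *ᵥ u) := by rw [hw, hG]
  rw [← hw] at hxV
  have hn : (n : ℝ) ≠ 0 := by
    have : n ≠ 0 := by omega
    exact_mod_cast this
  have hsum : ∑ i, w i = 0 := by
    simpa [hu, dotProduct] using huw
  have hmean : mean xV = αs := by
    simp only [mean, hxV, hu, Pi.add_apply, Pi.smul_apply, smul_eq_mul, mul_one,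
      Finset.sum_add_distrib, hsum, Finset.sum_const, Finset.card_univ, Fintype.card_fin,
      nsmul_eq_mul, zero_add]
    field_simp
  have hvar : variance xV = w ⬝ᵥ w := by
    simp only [variance, hmean, dotProduct]
    refine Finset.sum_congr rfl fun i _ => ?_
    simp only [hxV, hu, Pi.add_apply, Pi.smul_apply, smul_eq_mul]
    ring
  obtain ⟨e, he⟩ : ∃ e, e = z - mean z • u - w := ⟨_, rfl⟩
  have hvarz : variance z = (w + e) ⬝ᵥ (w + e) := by
    simp only [variance, dotProduct]
    refine Finset.sum_congr rfl fun i _ => ?_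
    simp only [he, hu, Pi.add_apply, Pi.sub_apply, Pi.smul_apply, smul_eq_mul]
    ring
  have hAe : A *ᵥ e = (αs - mean z) • (A *ᵥ u) := by
    rw [he, Matrix.mulVec_sub, Matrix.mulVec_sub, Matrix.mulVec_smul, hAw, hz, sub_smul]
    abel
  have hew : e ⬝ᵥ w = 0 := by
    have h1 : u ⬝ᵥ w = (A *ᵥ u) ⬝ᵥ ((A * Aᵀ)⁻¹ *ᵥ (b - αs • (A *ᵥ u))) := by rw [hw, hT]
    rw [hw, hT, hAe, smul_dotProduct, ← h1, huw, smul_zero]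
  have hne0 : e ≠ 0 := by
    intro h0
    rw [h0, Matrix.mulVec_zero] at hAe
    rcases smul_eq_zero.1 hAe.symm with h | h
    · apply hne
      have h4 : mean z = αs := by linarith
      rw [h0, h4] at he
      rw [hxV, ← sub_eq_zero, he]
      abel
    · exact hAu h
  have hpos : 0 < e ⬝ᵥ e := by
    refine lt_of_le_of_ne ?_ fun h => hne0 (dotProduct_self_eq_zero.1 h.symm)
    exact Finset.sum_nonneg fun i _ => mul_self_nonneg _
  rw [hvar, hvarz, add_dotProduct, dotProduct_add, dotProduct_add, dotProduct_comm w e, hew]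
  linarith
end

section
/- Let A be a real m×n matrix (m < n) of full rank m, let b be a real m-vector, and let u be the all-ones n-vector. Assume A u ≠ 0. Define α* = (uᵀ Aᵀ (A Aᵀ)⁻¹ b) / (uᵀ Aᵀ (A Aᵀ)⁻¹ A u), the base solution x_B = Aᵀ (A Aᵀ)⁻¹ (b − (A u) α*), and x_V = x_B + α* u. Then the mean of x_V equals α*, the zero-mean (variable) part of x_V equals x_B, and the variance of x_V equals ‖x_B‖². -/
open Matrix

theorem mv_solution_decomposition (m n : ℕ) (hm : 0 < m) (hmn : m < n)
    (A : Matrix (Fin m) (Fin n) ℝ) (hrank : A.rank = m)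
    (b : Fin m → ℝ)
    (u : Fin n → ℝ) (hu : u = fun _ => (1 : ℝ))
    (hAu : A *ᵥ u ≠ 0)
    (αs : ℝ)
    (hαs : αs = (u ⬝ᵥ Aᵀ *ᵥ ((A * Aᵀ)⁻¹ *ᵥ b)) /
                (u ⬝ᵥ Aᵀ *ᵥ ((A * Aᵀ)⁻¹ *ᵥ (A *ᵥ u))))
    (xB : Fin n → ℝ)
    (hxB : xB = Aᵀ *ᵥ ((A * Aᵀ)⁻¹ *ᵥ (b - αs • (A *ᵥ u))))
    (xV : Fin n → ℝ)
    (hxV : xV = xB + αs • u) :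
    mean xV = αs ∧ xV - mean xV • u = xB ∧ variance xV = ∑ i, xB i ^ 2 := by
  have hG : IsUnit (A * Aᵀ) := by
    rw [← Matrix.mulVec_surjective_iff_isUnit]
    have h1 : (A * Aᵀ).rank = m := by rw [rank_self_mul_transpose, hrank]
    have h2 : LinearMap.range (A * Aᵀ).mulVecLin = ⊤ := by
      apply Submodule.eq_top_of_finrank_eq
      rw [← Matrix.rank, h1]
      simp
    exact LinearMap.range_eq_top.mp h2
  have hdet : IsUnit (A * Aᵀ).det := (Matrix.isUnit_iff_isUnit_det _).mp hG
  have hD : (u ⬝ᵥ Aᵀ *ᵥ ((A * Aᵀ)⁻¹ *ᵥ (A *ᵥ u))) ≠ 0 := by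
    intro h0
    set w := (A * Aᵀ)⁻¹ *ᵥ (A *ᵥ u) with hw
    have hGw : A *ᵥ (Aᵀ *ᵥ w) = A *ᵥ u := by
      rw [hw, Matrix.mulVec_mulVec, Matrix.mulVec_mulVec (A *ᵥ u),
        Matrix.mul_nonsing_inv _ hdet, Matrix.one_mulVec]
    have h1 : (Aᵀ *ᵥ w) ⬝ᵥ (Aᵀ *ᵥ w) = 0 := by
      rw [Matrix.dotProduct_mulVec, Matrix.vecMul_transpose] at h0 ⊢
      rw [hGw]; exact h0
    rw [dotProduct_self_eq_zero] at h1
    rw [h1, Matrix.mulVec_zero] at hGw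
    exact hAu hGw.symm
  have hB : u ⬝ᵥ xB = 0 := by
    rw [hxB]
    simp only [Matrix.mulVec_sub, Matrix.mulVec_smul, dotProduct_sub, dotProduct_smul, smul_eq_mul]
    rw [hαs, div_mul_cancel₀ _ hD, sub_self]
  have hs : ∑ i, xB i = 0 := by
    simpa [hu, dotProduct] using hB
  have hn : (n : ℝ) ≠ 0 := by
    have : n ≠ 0 := by omega
    exact_mod_cast this
  have hmean : mean xV = αs := by
    unfold mean
    rw [hxV, hu]
    simp [Finset.sum_add_distrib, hs]
    field_simp
  refine ⟨hmean, ?_, ?_⟩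
  · rw [hmean, hxV]; simp
  · unfold variance
    rw [hmean, hxV, hu]
    simp
end

section
/- Let A be a real m×n matrix (m < n) of full rank m, let b be a real m-vector, and let u be the all-ones n-vector. Assume A u ≠ 0. Define α* = (uᵀ Aᵀ (A Aᵀ)⁻¹ b) / (uᵀ Aᵀ (A Aᵀ)⁻¹ A u) and the base solution x_B = Aᵀ (A Aᵀ)⁻¹ (b − (A u) α*). Then x_B is the unique minimum-variance solution of the base system: for every real n-vector z with A z = b − (A u) α* and z ≠ x_B, the variance of z is strictly greater than ‖x_B‖² (which equals the variance of x_B, since x_B is zero mean). -/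
open Matrix

theorem base_solution_unique_mv (m n : ℕ) (hm : 0 < m) (hmn : m < n)
    (A : Matrix (Fin m) (Fin n) ℝ) (hrank : A.rank = m)
    (b : Fin m → ℝ)
    (u : Fin n → ℝ) (hu : u = fun _ => (1 : ℝ))
    (hAu : A *ᵥ u ≠ 0)
    (αs : ℝ)
    (hαs : αs = (u ⬝ᵥ Aᵀ *ᵥ ((A * Aᵀ)⁻¹ *ᵥ b)) /
                (u ⬝ᵥ Aᵀ *ᵥ ((A * Aᵀ)⁻¹ *ᵥ (A *ᵥ u))))
    (xB : Fin n → ℝ)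
    (hxB : xB = Aᵀ *ᵥ ((A * Aᵀ)⁻¹ *ᵥ (b - αs • (A *ᵥ u)))) :
    ∀ z : Fin n → ℝ, A *ᵥ z = b - αs • (A *ᵥ u) → z ≠ xB →
      (∑ i, xB i ^ 2) < variance z := by
  have hU : IsUnit (A * Aᵀ) := by
    have hr : (A * Aᵀ).rank = m := by rw [Matrix.rank_self_mul_transpose, hrank]
    rw [← Matrix.mulVec_surjective_iff_isUnit, ← Matrix.coe_mulVecLin, ← LinearMap.range_eq_top]
    apply Submodule.eq_top_of_finrank_eq
    rw [← Matrix.rank, hr]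
    simp
  have hdet : IsUnit (A * Aᵀ).det := (Matrix.isUnit_iff_isUnit_det _).1 hU
  have hinv : ∀ c : Fin m → ℝ, A *ᵥ (Aᵀ *ᵥ ((A * Aᵀ)⁻¹ *ᵥ c)) = c := by
    intro c
    rw [Matrix.mulVec_mulVec, Matrix.mulVec_mulVec, Matrix.mul_nonsing_inv _ hdet,
      Matrix.one_mulVec]
  have hadj : ∀ (w : Fin n → ℝ) (y : Fin m → ℝ), w ⬝ᵥ Aᵀ *ᵥ y = (A *ᵥ w) ⬝ᵥ y := by
    intro w y
    rw [Matrix.dotProduct_mulVec, Matrix.vecMul_transpose]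
  have hden : (u ⬝ᵥ Aᵀ *ᵥ ((A * Aᵀ)⁻¹ *ᵥ (A *ᵥ u))) ≠ 0 := by
    intro h0
    have h1 := hinv (A *ᵥ u)
    set y := (A * Aᵀ)⁻¹ *ᵥ (A *ᵥ u) with hy
    rw [hadj, ← h1, ← hadj, dotProduct_self_eq_zero] at h0
    rw [h0, Matrix.mulVec_zero] at h1
    exact hAu h1.symm
  have hxu : u ⬝ᵥ xB = 0 := by
    rw [hxB, Matrix.mulVec_sub, Matrix.mulVec_smul, Matrix.mulVec_sub, Matrix.mulVec_smul,
      dotProduct_sub, dotProduct_smul, smul_eq_mul, hαs, div_mul_cancel₀ _ hden, sub_self]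
  intro z hz hne
  have hAx : A *ᵥ xB = b - αs • (A *ᵥ u) := by rw [hxB, hinv]
  obtain ⟨v, hv⟩ : ∃ v, v = z - xB - mean z • u := ⟨_, rfl⟩
  have hAw : A *ᵥ (z - xB) = 0 := by rw [Matrix.mulVec_sub, hz, hAx, sub_self]
  have hwx : (z - xB) ⬝ᵥ xB = 0 := by
    have h := hadj (z - xB) ((A * Aᵀ)⁻¹ *ᵥ (b - αs • (A *ᵥ u)))
    rw [← hxB, hAw, zero_dotProduct] at h
    exact h
  have hvx : v ⬝ᵥ xB = 0 := by
    rw [hv, sub_dotProduct, smul_dotProduct, hwx, hxu]; simp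
  have hv0 : v ≠ 0 := by
    intro h
    rw [h] at hv
    have h1 : z - xB = mean z • u := sub_eq_zero.1 hv.symm
    have h2 := hAw
    rw [h1, Matrix.mulVec_smul] at h2
    rcases smul_eq_zero.1 h2 with h3 | h3
    · rw [h3, zero_smul] at h1
      exact hne (sub_eq_zero.1 h1)
    · exact hAu h3
  have hvar : variance z = v ⬝ᵥ v + 2 * (v ⬝ᵥ xB) + ∑ i, xB i ^ 2 := by
    simp only [variance, dotProduct, Finset.mul_sum, ← Finset.sum_add_distrib]
    refine Finset.sum_congr rfl fun i _ => ?_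
    simp only [hv, hu, Pi.sub_apply, Pi.smul_apply, smul_eq_mul]
    ring
  have hpos : 0 < v ⬝ᵥ v := by
    refine lt_of_le_of_ne ?_ (fun h => hv0 (dotProduct_self_eq_zero.1 h.symm))
    exact Finset.sum_nonneg fun i _ => mul_self_nonneg _
  rw [hvar, hvx]
  linarith
end

section
/- Let A be a real m×n matrix (m < n) of full rank m, let b be a real m-vector, and let u be the all-ones n-vector. Assume A u = 0. Then the minimum-norm solution x_N = Aᵀ (A Aᵀ)⁻¹ b is also a minimum-variance solution: for every real n-vector z with A z = b, the variance of z is at least ‖x_N‖², and the variance of x_N equals ‖x_N‖². -/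
open Matrix

theorem mn_solution_is_mv (m n : ℕ) (hm : 0 < m) (hmn : m < n)
    (A : Matrix (Fin m) (Fin n) ℝ) (hrank : A.rank = m)
    (b : Fin m → ℝ)
    (u : Fin n → ℝ) (hu : u = fun _ => (1 : ℝ))
    (hAu : A *ᵥ u = 0)
    (xN : Fin n → ℝ) (hxN : xN = Aᵀ *ᵥ ((A * Aᵀ)⁻¹ *ᵥ b)) :
    (∀ z : Fin n → ℝ, A *ᵥ z = b → (∑ i, xN i ^ 2) ≤ variance z) ∧
    variance xN = ∑ i, xN i ^ 2 := by
  have hunit : IsUnit (A * Aᵀ).det := by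
    have h1 : (A * Aᵀ).rank = Fintype.card (Fin m) := by
      rw [Matrix.rank_self_mul_transpose, hrank, Fintype.card_fin]
    have h2 : IsUnit (A * Aᵀ) := by
      rw [← Matrix.mulVec_surjective_iff_isUnit]
      have h3 : LinearMap.range (A * Aᵀ).mulVecLin = ⊤ := by
        apply Submodule.eq_top_of_finrank_eq
        rw [Module.finrank_fintype_fun_eq_card]
        exact h1
      intro v
      obtain ⟨w, hw⟩ := LinearMap.range_eq_top.mp h3 v
      exact ⟨w, hw⟩
    exact (Matrix.isUnit_iff_isUnit_det _).mp h2
  have hAx : A *ᵥ xN = b := by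
    rw [hxN, Matrix.mulVec_mulVec, Matrix.mulVec_mulVec, Matrix.mul_nonsing_inv _ hunit,
      Matrix.one_mulVec]
  -- the row space is orthogonal to the kernel
  have horth : ∀ v : Fin n → ℝ, A *ᵥ v = 0 → ∑ i, xN i * v i = 0 := by
    intro v hv
    change xN ⬝ᵥ v = 0
    rw [hxN, Matrix.mulVec_transpose, ← Matrix.dotProduct_mulVec, hv, dotProduct_zero]
  have hmean : mean xN = 0 := by
    have h := horth u hAu
    simp only [hu, mul_one] at h
    simp [mean, h]
  refine ⟨fun z hz => ?_, by simp [variance, hmean]⟩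
  have hk : A *ᵥ (z - mean z • u - xN) = 0 := by
    rw [Matrix.mulVec_sub, Matrix.mulVec_sub, Matrix.mulVec_smul, hAu, hAx, hz]
    simp
  have h0 := horth _ hk
  have hdecomp : variance z = ∑ i, xN i ^ 2
      + 2 * ∑ i, xN i * (z - mean z • u - xN) i + ∑ i, ((z - mean z • u - xN) i) ^ 2 := by
    rw [variance, Finset.mul_sum, ← Finset.sum_add_distrib, ← Finset.sum_add_distrib]
    refine Finset.sum_congr rfl fun i _ => ?_
    simp only [hu, Pi.sub_apply, Pi.smul_apply, smul_eq_mul]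
    ring
  have hnn : 0 ≤ ∑ i, ((z - mean z • u - xN) i) ^ 2 :=
    Finset.sum_nonneg fun i _ => sq_nonneg _
  rw [hdecomp, h0]
  linarith
end

section
/- Let A be a real m×n matrix (m < n) of full rank m, let b be a real m-vector, and let u be the all-ones n-vector. Assume A u ≠ 0. Define α* = (uᵀ Aᵀ (A Aᵀ)⁻¹ b) / (uᵀ Aᵀ (A Aᵀ)⁻¹ A u) and x_B = Aᵀ (A Aᵀ)⁻¹ (b − (A u) α*). If z is a solution of A x = b whose variance is at most ‖x_B‖², then the mean of z equals α* and the zero-mean part of z equals x_B (hence z = x_B + α* u). -/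
open Matrix

theorem low_variance_solution_eq (m n : ℕ) (hm : 0 < m) (hmn : m < n)
    (A : Matrix (Fin m) (Fin n) ℝ) (hrank : A.rank = m)
    (b : Fin m → ℝ)
    (u : Fin n → ℝ) (hu : u = fun _ => (1 : ℝ))
    (hAu : A *ᵥ u ≠ 0)
    (αs : ℝ)
    (hαs : αs = (u ⬝ᵥ Aᵀ *ᵥ ((A * Aᵀ)⁻¹ *ᵥ b)) /
                (u ⬝ᵥ Aᵀ *ᵥ ((A * Aᵀ)⁻¹ *ᵥ (A *ᵥ u))))
    (xB : Fin n → ℝ)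
    (hxB : xB = Aᵀ *ᵥ ((A * Aᵀ)⁻¹ *ᵥ (b - αs • (A *ᵥ u))))
    (z : Fin n → ℝ) (hz : A *ᵥ z = b)
    (hvar : variance z ≤ ∑ i, xB i ^ 2) :
    mean z = αs ∧ z - mean z • u = xB ∧ z = xB + αs • u := by
  have hrk : (A * Aᵀ).rank = m := by rw [Matrix.rank_self_mul_transpose, hrank]
  have hun : IsUnit (A * Aᵀ) := by
    rw [← Matrix.mulVec_surjective_iff_isUnit]
    have h1 : LinearMap.range (A * Aᵀ).mulVecLin = ⊤ := by
      apply Submodule.eq_top_of_finrank_eq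
      have h2 : Module.finrank ℝ (LinearMap.range (A * Aᵀ).mulVecLin) = m := hrk
      rw [h2]; simp
    exact LinearMap.range_eq_top.mp h1
  have hdet : IsUnit (A * Aᵀ).det := (Matrix.isUnit_iff_isUnit_det _).mp hun
  have hG : ∀ v : Fin m → ℝ, A *ᵥ (Aᵀ *ᵥ ((A * Aᵀ)⁻¹ *ᵥ v)) = v := by
    intro v
    rw [Matrix.mulVec_mulVec, Matrix.mulVec_mulVec, Matrix.mul_nonsing_inv _ hdet,
      Matrix.one_mulVec]
  have hdot : ∀ (y : Fin m → ℝ) (v : Fin n → ℝ), (Aᵀ *ᵥ y) ⬝ᵥ v = y ⬝ᵥ (A *ᵥ v) := by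
    intro y v
    rw [Matrix.mulVec_transpose, Matrix.dotProduct_mulVec]
  have hD : (u ⬝ᵥ Aᵀ *ᵥ ((A * Aᵀ)⁻¹ *ᵥ (A *ᵥ u))) ≠ 0 := by
    intro h0
    have hg := hG (A *ᵥ u)
    rw [dotProduct_comm, hdot] at h0
    nth_rewrite 2 [← hg] at h0
    rw [← hdot, dotProduct_self_eq_zero] at h0
    rw [h0, Matrix.mulVec_zero] at hg
    exact hAu hg.symm
  have hux : xB ⬝ᵥ u = 0 := by
    rw [dotProduct_comm, hxB, Matrix.mulVec_sub, Matrix.mulVec_sub, Matrix.mulVec_smul,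
      Matrix.mulVec_smul, dotProduct_sub, dotProduct_smul, smul_eq_mul, hαs,
      div_mul_cancel₀ _ hD, sub_self]
  have hAx : A *ᵥ xB = b - αs • (A *ᵥ u) := by rw [hxB, hG]
  set y := (A * Aᵀ)⁻¹ *ᵥ (b - αs • (A *ᵥ u)) with hy
  have hyu : y ⬝ᵥ (A *ᵥ u) = 0 := by rw [← hdot, ← hxB, hux]
  have hxx : xB ⬝ᵥ xB = y ⬝ᵥ b := by
    nth_rewrite 1 [hxB]
    rw [hdot, hAx, dotProduct_sub, dotProduct_smul, hyu, smul_zero, sub_zero]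
  have hAw : A *ᵥ (z - mean z • u) = b - mean z • (A *ᵥ u) := by
    rw [Matrix.mulVec_sub, Matrix.mulVec_smul, hz]
  have hxw : xB ⬝ᵥ (z - mean z • u) = y ⬝ᵥ b := by
    nth_rewrite 1 [hxB]
    rw [hdot, hAw, dotProduct_sub, dotProduct_smul, hyu, smul_zero, sub_zero]
  have hww : (z - mean z • u) ⬝ᵥ (z - mean z • u) = variance z := by
    subst hu
    simp [dotProduct, variance, pow_two]
  have hxs : ∑ i, xB i ^ 2 = xB ⬝ᵥ xB := by simp [dotProduct, pow_two]
  have hle : (z - mean z • u - xB) ⬝ᵥ (z - mean z • u - xB) ≤ 0 := by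
    generalize z - mean z • u = w at *
    rw [dotProduct_sub, sub_dotProduct, sub_dotProduct, dotProduct_comm w xB]
    linarith
  have hge : 0 ≤ (z - mean z • u - xB) ⬝ᵥ (z - mean z • u - xB) :=
    Finset.sum_nonneg fun i _ => mul_self_nonneg _
  have hw : z - mean z • u = xB :=
    sub_eq_zero.mp (dotProduct_self_eq_zero.mp (le_antisymm hle hge))
  have hmean : mean z = αs := by
    rw [hw, hAx] at hAw
    exact (smul_left_injective ℝ hAu (sub_right_injective hAw)).symm
  refine ⟨hmean, hw, ?_⟩
  rw [← hw, hmean, sub_add_cancel]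
end
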